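/- For every α≥1 there exists a constant D≥1 with the following property. Let X be a complex Banach space having property (α) with constant at most α. Then for all integers m,n≥1, every matrix a = [a_{ij}]_{1≤i,j≤n} with entries a_{ij}∈M_m(ℂ) whose operator norm as an element of M_{nm}(ℂ) is at most 1, and all vectors x_{jl}∈X (1≤j≤n, 1≤l≤m): (2^{-(n+m)} Σ_{ε∈{±1}^n} Σ_{η∈{±1}^m} ‖Σ_{i,j=1}^n Σ_{k,l=1}^m ε_i η_k (a_{ij})_{kl} x_{jl}‖²)^{1/2} ≤ D·(2^{-(n+m)} Σ_{ε,η} ‖Σ_{j=1}^n Σ_{l=1}^m ε_j η_l x_{jl}‖²)^{1/2}. (This says that the canonical homomorphisms σ_{m,X}: M_m(ℂ)→B(Rad_m(X)), σ_{m,X}(a)=a⊗Id_X, are matricially R-bounded uniformly in m.) -/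

import Mathlib

noncomputable section

/-- The sign `±1` (as a complex scalar) associated to a boolean. -/
def sgn (b : Bool) : ℂ := if b then 1 else -1

/-- Rademacher average `(2^{-n} Σ_{ε ∈ {±1}^n} ‖Σ_k ε_k x_k‖²)^{1/2}`. -/
def radNorm {X : Type*} [NormedAddCommGroup X] [NormedSpace ℂ X] {n : ℕ}
    (x : Fin n → X) : ℝ :=
  Real.sqrt ((∑ ε : Fin n → Bool, ‖∑ k, sgn (ε k) • x k‖ ^ 2) / 2 ^ n)

/-- Doubly indexed Rademacher average
`(2^{-n-m} Σ_{ε ∈ {±1}^n, η ∈ {±1}^m} ‖Σ_{i,j} ε_i η_j x_{ij}‖²)^{1/2}`. -/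
def radNorm2 {X : Type*} [NormedAddCommGroup X] [NormedSpace ℂ X] {n m : ℕ}
    (x : Fin n → Fin m → X) : ℝ :=
  Real.sqrt ((∑ ε : Fin n → Bool, ∑ η : Fin m → Bool,
    ‖∑ i, ∑ j, (sgn (ε i) * sgn (η j)) • x i j‖ ^ 2) / 2 ^ (n + m))

/-- `X` has property (α) with constant `α`. -/
def PropAlphaWith (X : Type*) [NormedAddCommGroup X] [NormedSpace ℂ X]
    (α : ℝ) : Prop :=
  ∀ (n m : ℕ) (x : Fin n → Fin m → X) (t : Fin n → Fin m → ℂ),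
    (∀ i j, ‖t i j‖ ≤ 1) →
      radNorm2 (fun i j => t i j • x i j) ≤ α * radNorm2 x

/-- The operator norm of a complex matrix, acting on the finite dimensional
ℓ²-space. -/
def matOpNorm {p : Type*} [Fintype p] [DecidableEq p] (a : Matrix p p ℂ) : ℝ :=
  ‖Matrix.toEuclideanCLM (𝕜 := ℂ) a‖
universe u

/-!
Write `radMeanSq y` for the mean square of a Rademacher sum and `gaussMeanSq y` for its Gaussian
analogue. Averaging property (α) over all sign patterns on pairs `(i, j)` makes the doubly indexed
mean square of `x` comparable to the mean square of the Rademacher sum over pairs, so it suffices to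
treat one complex matrix `A` of norm at most `1` acting on singly indexed sums.

Gaussian mean squares are contracted by every real matrix `B` with `‖B‖ ≤ 1`: the sum for `B y` has
the law of `∑ j, v j • y j` with `v ∼ N(0, Bᵀ B)`, and `N(0, 1)` is the convolution of `N(0, Bᵀ B)`
with the centred law `N(0, 1 - Bᵀ B)`, so Jensen's inequality applies. Finally
`(𝔼 |γ|) ^ 2 * radMeanSq y ≤ gaussMeanSq y` by Jensen's inequality conditionally on the signs of the
Gaussians, while `gaussMeanSq y ≤ α ^ 2 * radMeanSq y` because, by the central limit theorem, a
Gaussian sum is a limit of normalized Rademacher sums in which every vector of `y` is repeated.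

These facts apply to the real and imaginary parts of `A`, which have norm at most `1`.
-/

open MeasureTheory ProbabilityTheory Filter Topology
open scoped BigOperators ENNReal

section RademacherMean

variable {ι κ ι' κ' E : Type*} [Fintype ι] [Fintype κ] [Fintype ι'] [Fintype κ']
  [DecidableEq ι] [DecidableEq κ] [DecidableEq ι'] [DecidableEq κ'] [SeminormedAddCommGroup E]

/-- The mean square `𝔼 ‖∑ j, ε j • y j‖ ^ 2` of a Rademacher sum. Signs are elements of `ℤˣ`, so
that changes of sign are translations in the group `ι → ℤˣ`. -/
def radMeanSq (y : ι → E) : ℝ := 𝔼 ε : ι → ℤˣ, ‖∑ j, ε j • y j‖ ^ 2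

/-- The mean square `𝔼 ‖∑ i, ∑ j, (ε i * η j) • x i j‖ ^ 2` of a doubly indexed Rademacher sum, the
square of the paper's norm on `Rad(Rad(X))`. -/
def radMeanSq₂ (x : ι → κ → E) : ℝ :=
  𝔼 ε : ι → ℤˣ, 𝔼 η : κ → ℤˣ, ‖∑ i, ∑ j, (ε i * η j) • x i j‖ ^ 2

lemma radMeanSq_nonneg (y : ι → E) : 0 ≤ radMeanSq y :=
  Finset.expect_nonneg fun _ _ => sq_nonneg _

lemma radMeanSq₂_nonneg (x : ι → κ → E) : 0 ≤ radMeanSq₂ x :=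
  Finset.expect_nonneg fun _ _ => Finset.expect_nonneg fun _ _ => sq_nonneg _

lemma radMeanSq_smul (δ : ι → ℤˣ) (y : ι → E) : radMeanSq (δ • y) = radMeanSq y :=
  Fintype.expect_equiv (Equiv.mulRight δ) _ _ fun ε => by simp [smul_smul]

lemma radMeanSq₂_comp_equiv (e : ι ≃ ι') (f : κ ≃ κ') (x : ι' → κ' → E) :
    radMeanSq₂ (fun i j => x (e i) (f j)) = radMeanSq₂ x := by
  refine Fintype.expect_equiv (e.arrowCongr (.refl _)) _ _ fun ε => ?_
  refine Fintype.expect_equiv (f.arrowCongr (.refl _)) _ _ fun η => ?_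
  congr 2
  refine Fintype.sum_equiv e _ _ fun i => Fintype.sum_equiv f _ _ fun j => ?_
  simp

lemma expect_radMeanSq₂_smul (x : ι → κ → E) :
    𝔼 δ : ι × κ → ℤˣ, radMeanSq₂ (fun i j => δ (i, j) • x i j) =
      radMeanSq (Function.uncurry x) := by
  have average_over_δ (ε : ι → ℤˣ) (η : κ → ℤˣ) :
      𝔼 δ : ι × κ → ℤˣ, ‖∑ i, ∑ j, (ε i * η j) • δ (i, j) • x i j‖ ^ 2 =
        radMeanSq (Function.uncurry x) := by
    rw [← radMeanSq_smul (fun p => ε p.1 * η p.2)]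
    simp [radMeanSq, Fintype.sum_prod_type, smul_smul, mul_comm]
  simp only [radMeanSq₂]
  rw [Finset.expect_comm]
  simp only [Finset.expect_comm (s := (Finset.univ : Finset (ι × κ → ℤˣ))), average_over_δ,
    Fintype.expect_const]

lemma expect_mul_sign_of_ne {k l : ι} (hkl : k ≠ l) :
    𝔼 ε : ι → ℤˣ, ((ε k : ℤ) * (ε l : ℤ) : ℝ) = 0 := by
  have flip_k : 𝔼 ε : ι → ℤˣ, ((ε k : ℤ) * (ε l : ℤ) : ℝ) =
      𝔼 ε : ι → ℤˣ, -((ε k : ℤ) * (ε l : ℤ) : ℝ) :=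
    Fintype.expect_equiv (Equiv.mulRight (Pi.mulSingle k (-1))) _ _ fun ε => by
      simp [Pi.mulSingle_eq_of_ne hkl.symm]
  rw [Finset.expect_neg_distrib] at flip_k
  linarith

lemma expect_sum_sign_sq :
    𝔼 ε : ι → ℤˣ, (∑ k, ((ε k : ℤ) : ℝ)) ^ 2 = Fintype.card ι := by
  have expect_mul (k l : ι) :
      𝔼 ε : ι → ℤˣ, ((ε k : ℤ) * (ε l : ℤ) : ℝ) = if k = l then 1 else 0 := by
    split_ifs with hkl
    · simp [hkl, ← Int.cast_mul, ← Units.val_mul]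
    · exact expect_mul_sign_of_ne hkl
  simp [sq, Finset.sum_mul_sum, Finset.expect_sum_comm, expect_mul]

end RademacherMean

section RealScalars

variable {ι κ E : Type*} [Fintype ι] [Fintype κ] [DecidableEq ι] [DecidableEq κ]
  [SeminormedAddCommGroup E] [NormedSpace ℝ E]

lemma sign_smul_eq_intCast_smul {M : Type*} [AddCommGroup M] [Module ℝ M] (e : ℤˣ) (x : M) :
    e • x = ((e : ℤ) : ℝ) • x := by
  rw [Units.smul_def, Int.cast_smul_eq_zsmul]

lemma radMeanSq₂_const (y : κ → E) :
    radMeanSq₂ (fun _ : ι => y) = Fintype.card ι * radMeanSq y := by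
  have norm_factors (ε : ι → ℤˣ) (η : κ → ℤˣ) :
      ‖∑ i, ∑ j, (ε i * η j) • y j‖ ^ 2 =
        (∑ k, ((ε k : ℤ) : ℝ)) ^ 2 * ‖∑ j, η j • y j‖ ^ 2 := by
    have sum_factors : ∑ i, ∑ j, (ε i * η j) • y j = (∑ k, ((ε k : ℤ) : ℝ)) • ∑ j, η j • y j := by
      simp only [mul_smul, ← Finset.smul_sum, sign_smul_eq_intCast_smul, Finset.sum_smul]
    rw [sum_factors, norm_smul, mul_pow, Real.norm_eq_abs, sq_abs]
  simp only [radMeanSq₂, norm_factors, ← Finset.mul_expect, ← Finset.expect_mul, expect_sum_sign_sq,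
    radMeanSq]

end RealScalars

section PropertyAlpha

variable {X : Type*} [NormedAddCommGroup X] [NormedSpace ℂ X]

/-- The bijection `Bool ≃ {±1}` underlying `sgn`. -/
def boolEquivSign : Bool ≃ ℤˣ where
  toFun b := if b then 1 else -1
  invFun e := e = 1
  left_inv b := by cases b <;> decide
  right_inv e := by rcases Int.units_eq_one_or e with rfl | rfl <;> decide

lemma sgn_smul {M : Type*} [AddCommGroup M] [Module ℂ M] (b : Bool) (x : M) :
    sgn b • x = boolEquivSign b • x := by
  cases b <;> simp [sgn, boolEquivSign, Units.smul_def]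

lemma radNorm2_eq_sqrt {n m : ℕ} (x : Fin n → Fin m → X) : radNorm2 x = √(radMeanSq₂ x) := by
  have expect_bool {n : ℕ} (f : (Fin n → ℤˣ) → ℝ) :
      𝔼 ε, f ε = (∑ ε : Fin n → Bool, f (boolEquivSign ∘ ε)) / 2 ^ n := by
    rw [Fintype.expect_eq_sum_div_card, ← ((Equiv.refl (Fin n)).arrowCongr boolEquivSign).sum_comp]
    simp [Equiv.arrowCongr]
  simp only [radNorm2, radMeanSq₂, expect_bool, ← Finset.sum_div, div_div, ← pow_add, mul_smul,
    sgn_smul, Function.comp_apply, add_comm]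

variable {ι κ : Type*} [Fintype ι] [Fintype κ] [DecidableEq ι] [DecidableEq κ] {α : ℝ}

namespace PropAlphaWith

lemma radMeanSq₂_smul_le (hX : PropAlphaWith X α) (x : ι → κ → X) {t : ι → κ → ℂ}
    (ht : ∀ i j, ‖t i j‖ ≤ 1) :
    radMeanSq₂ (fun i j => t i j • x i j) ≤ α ^ 2 * radMeanSq₂ x := by
  let e := (Fintype.equivFin ι).symm
  let f := (Fintype.equivFin κ).symm
  have h := hX _ _ (fun i j => x (e i) (f j)) (fun i j => t (e i) (f j)) fun i j => ht _ _
  rw [radNorm2_eq_sqrt, radNorm2_eq_sqrt, radMeanSq₂_comp_equiv e f x,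
    radMeanSq₂_comp_equiv e f fun i j => t i j • x i j] at h
  simpa [mul_pow, Real.sq_sqrt, radMeanSq₂_nonneg] using pow_le_pow_left₀ (Real.sqrt_nonneg _) h 2

lemma radMeanSq₂_sign_smul_le (hX : PropAlphaWith X α) (δ : ι × κ → ℤˣ) (x : ι → κ → X) :
    radMeanSq₂ (fun i j => δ (i, j) • x i j) ≤ α ^ 2 * radMeanSq₂ x := by
  simpa [Units.smul_def, Int.cast_smul_eq_zsmul] using
    hX.radMeanSq₂_smul_le x (t := fun i j => ((δ (i, j) : ℤ) : ℂ)) fun i j => by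
      rcases Int.units_eq_one_or (δ (i, j)) with h | h <;> simp [h]

lemma radMeanSq_uncurry_le (hX : PropAlphaWith X α) (x : ι → κ → X) :
    radMeanSq (Function.uncurry x) ≤ α ^ 2 * radMeanSq₂ x := by
  rw [← expect_radMeanSq₂_smul]
  exact Finset.expect_le Finset.univ_nonempty fun δ _ => hX.radMeanSq₂_sign_smul_le δ x

lemma radMeanSq₂_le_uncurry (hX : PropAlphaWith X α) (x : ι → κ → X) :
    radMeanSq₂ x ≤ α ^ 2 * radMeanSq (Function.uncurry x) := by
  rw [← expect_radMeanSq₂_smul, Finset.mul_expect]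
  refine Finset.le_expect Finset.univ_nonempty fun δ _ => ?_
  simpa [smul_smul, Int.units_mul_self] using
    hX.radMeanSq₂_sign_smul_le δ (fun i j => δ (i, j) • x i j)

lemma radMeanSq_comp_snd_le (hX : PropAlphaWith X α) (y : κ → X) :
    radMeanSq (fun p : ι × κ => y p.2) ≤ α ^ 2 * (Fintype.card ι * radMeanSq y) := by
  rw [← radMeanSq₂_const]
  exact hX.radMeanSq_uncurry_le fun _ : ι => y

end PropAlphaWith

end PropertyAlpha

section UniformLaw

variable {Ω E : Type*} [Fintype Ω] [MeasurableSpace E]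

/-- The law of `V ω` when `ω` is drawn uniformly from the finite type `Ω`. -/
def uniformLaw (V : Ω → E) : Measure E :=
  (Fintype.card Ω : ℝ≥0∞)⁻¹ • ∑ ω, Measure.dirac (V ω)

instance [Nonempty Ω] (V : Ω → E) : IsProbabilityMeasure (uniformLaw V) where
  measure_univ := by
    simp [uniformLaw, ENNReal.inv_mul_cancel]

variable [MeasurableSingletonClass E] {F : Type*} [NormedAddCommGroup F]

lemma integrable_uniformLaw [Nonempty Ω] (V : Ω → E) (f : E → F) : Integrable f (uniformLaw V) :=
  (integrable_finsetSum_measure.2 fun _ _ => integrable_dirac enorm_lt_top).smul_measure (by simp)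

lemma integral_uniformLaw [NormedSpace ℝ F] [CompleteSpace F] [Module ℚ≥0 F] (V : Ω → E)
    (f : E → F) :
    ∫ v, f v ∂uniformLaw V = 𝔼 ω, f (V ω) := by
  rw [uniformLaw, integral_smul_measure,
    integral_finsetSum_measure fun _ _ => integrable_dirac enorm_lt_top, Finset.expect]
  simp [integral_dirac, ← NNRat.cast_smul_eq_nnqsmul ℝ]

lemma lintegral_uniformLaw_ofReal [Nonempty Ω] (V : Ω → E) {f : E → ℝ} (hf : ∀ v, 0 ≤ f v) :
    ∫⁻ v, ENNReal.ofReal (f v) ∂uniformLaw V = ENNReal.ofReal (𝔼 ω, f (V ω)) := by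
  rw [← integral_uniformLaw, ofReal_integral_eq_lintegral_ofReal (integrable_uniformLaw V f)
    (ae_of_all _ hf)]

end UniformLaw

section CentralLimit

variable {ι : Type*} [Fintype ι] [DecidableEq ι]

lemma expect_prod_eval {Ω : ι → Type*} [∀ i, Fintype (Ω i)] {R : Type*} [Semifield R] [CharZero R]
    (f : ∀ i, Ω i → R) :
    𝔼 ω : ∀ i, Ω i, ∏ i, f i (ω i) = ∏ i, 𝔼 s, f i s := by
  simp [Fintype.expect_eq_sum_div_card, Finset.prod_univ_sum, Finset.prod_div_distrib]

/-- The law of a single fair sign, on the real line. -/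
def signLaw : Measure ℝ := uniformLaw fun e : ℤˣ => ((e : ℤ) : ℝ)

instance : IsProbabilityMeasure signLaw := inferInstanceAs (IsProbabilityMeasure (uniformLaw _))

lemma tendsto_charFun_signLaw_pow (t : ℝ) :
    Tendsto (fun K : ℕ => charFun signLaw ((√K)⁻¹ * t) ^ K) atTop
      (𝓝 (Complex.exp (-t ^ 2 / 2))) := by
  have expect_sign (f : ℝ → ℝ) : ∫ x, f x ∂signLaw = (f 1 + f (-1)) / 2 := by
    rw [signLaw, integral_uniformLaw, Fintype.expect_eq_sum_div_card]
    simp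
  simpa using tendsto_charFun_inv_sqrt_mul_pow (P := signLaw) (X := id) aemeasurable_id
    (by simp [expect_sign]) (by simp [expect_sign]) t

/-- The vector with coordinates `K^{-1/2} ∑ k, ω (k, j)`: a normalized sum of `K` sign vectors, as
in the central limit theorem. -/
def normalizedSignSum {K : ℕ} (ω : Fin K × ι → ℤˣ) : EuclideanSpace ℝ ι :=
  WithLp.toLp 2 fun j => (√K)⁻¹ * ∑ k, ((ω (k, j) : ℤ) : ℝ)

lemma charFun_uniformLaw_normalizedSignSum (K : ℕ) (t : EuclideanSpace ℝ ι) :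
    charFun (uniformLaw (normalizedSignSum (ι := ι) (K := K))) t =
      ∏ j, charFun signLaw ((√K)⁻¹ * t j) ^ K := by
  have inner_eq (ω : Fin K × ι → ℤˣ) : inner ℝ (normalizedSignSum ω) t =
      ∑ p : Fin K × ι, ((ω p : ℤ) : ℝ) * ((√K)⁻¹ * t p.2) := by
    simp only [normalizedSignSum, PiLp.inner_apply, Fintype.sum_prod_type_right, ← Finset.sum_mul,
      RCLike.inner_apply, conj_trivial]
    exact Finset.sum_congr rfl fun j _ => by ring
  simp_rw [charFun_apply, signLaw, integral_uniformLaw, inner_eq, Complex.ofReal_sum,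
    Finset.sum_mul, Complex.exp_sum]
  rw [expect_prod_eval fun (p : Fin K × ι) (e : ℤˣ) =>
    Complex.exp ((((e : ℤ) : ℝ) * ((√K)⁻¹ * t p.2) : ℝ) * Complex.I)]
  simp [Fintype.prod_prod_type_right, mul_comm]

lemma tendsto_uniformLaw_normalizedSignSum :
    Tendsto (β := ProbabilityMeasure (EuclideanSpace ℝ ι))
      (fun K : ℕ => ⟨uniformLaw (normalizedSignSum (K := K)), inferInstance⟩) atTop
      (𝓝 ⟨stdGaussian (EuclideanSpace ℝ ι), inferInstance⟩) := by
  refine ProbabilityMeasure.tendsto_iff_tendsto_charFun.2 fun t => ?_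
  have charFun_gauss : charFun (stdGaussian (EuclideanSpace ℝ ι)) t =
      ∏ j, Complex.exp (-t j ^ 2 / 2) := by
    rw [charFun_stdGaussian, ← Complex.exp_sum, ← Complex.ofReal_pow,
      EuclideanSpace.real_norm_sq_eq]
    simp [neg_div, Finset.sum_div]
  simp only [ProbabilityMeasure.coe_mk, charFun_uniformLaw_normalizedSignSum, charFun_gauss]
  exact tendsto_finsetProd _ fun j _ => tendsto_charFun_signLaw_pow (t j)

end CentralLimit

lemma convexOn_norm_sq_comp {V E : Type*} [AddCommGroup V] [Module ℝ V] [SeminormedAddCommGroup E]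
    [NormedSpace ℝ E] (L : V →ₗ[ℝ] E) : ConvexOn ℝ Set.univ fun v => ‖L v‖ ^ 2 :=
  ((convexOn_norm convex_univ).comp_linearMap L).pow (fun _ _ => norm_nonneg _) 2

lemma integral_le_integral_conv_of_convexOn {V : Type*} [NormedAddCommGroup V] [NormedSpace ℝ V]
    [MeasurableSpace V] [BorelSpace V] [CompleteSpace V] [SecondCountableTopology V]
    {μ ν : Measure V} [SFinite μ] [IsProbabilityMeasure ν]
    {f : V → ℝ} (hf : ConvexOn ℝ Set.univ f) (hfc : Continuous f) (hν : Integrable (fun v => v) ν)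
    (hν0 : ∫ v, v ∂ν = 0) (hfμ : Integrable f μ) (hfμν : Integrable f (μ ∗ ν)) :
    ∫ v, f v ∂μ ≤ ∫ v, f v ∂(μ ∗ ν) := by
  have hf_prod : Integrable (fun p : V × V => f (p.1 + p.2)) (μ.prod ν) :=
    (integrable_map_measure hfμν.aestronglyMeasurable (by fun_prop)).1 hfμν
  rw [integral_conv hfμν]
  refine integral_mono_ae hfμ hf_prod.integral_prod_left ?_
  filter_upwards [hf_prod.prod_right_ae] with u hu
  have centre : ∫ w, u + w ∂ν = u := by
    rw [integral_add (integrable_const u) hν, hν0]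
    simp
  simpa [centre] using hf.map_integral_le (f := fun w => u + w) hfc.continuousOn isClosed_univ
    (by simp) ((integrable_const u).add hν) hu

section GaussianCovariance

variable {ι : Type*} [Fintype ι] [DecidableEq ι]

open scoped Matrix

lemma dotProduct_transpose_mul_self_mulVec (B : Matrix ι ι ℝ) (v : EuclideanSpace ℝ ι) :
    v ⬝ᵥ (Bᵀ * B) *ᵥ v = ‖Matrix.toEuclideanCLM (𝕜 := ℝ) B v‖ ^ 2 := by
  rw [EuclideanSpace.real_norm_sq_eq, ← Matrix.mulVec_mulVec, Matrix.dotProduct_mulVec,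
    Matrix.vecMul_transpose]
  simp [dotProduct, sq]

lemma map_toEuclideanCLM_transpose_stdGaussian (B : Matrix ι ι ℝ) :
    (stdGaussian (EuclideanSpace ℝ ι)).map (Matrix.toEuclideanCLM (𝕜 := ℝ) Bᵀ) =
      multivariateGaussian 0 (Bᵀ * B) := by
  refine Measure.ext_of_charFun (funext fun t => ?_)
  have inner_adjoint (v : EuclideanSpace ℝ ι) :
      inner ℝ (Matrix.toEuclideanCLM (𝕜 := ℝ) Bᵀ v) t =
        inner ℝ v (Matrix.toEuclideanCLM (𝕜 := ℝ) B t) := by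
    rw [real_inner_comm, Matrix.inner_toEuclideanCLM, Matrix.inner_toEuclideanCLM,
      Matrix.dotProduct_mulVec, Matrix.vecMul_transpose, dotProduct_comm]
  rw [charFun_apply, integral_map (by fun_prop) (by fun_prop)]
  simp_rw [inner_adjoint]
  rw [← charFun_apply, charFun_stdGaussian, charFun_multivariateGaussian
    (by simpa using B.posSemidef_conjTranspose_mul_self), dotProduct_transpose_mul_self_mulVec]
  simp [neg_div]

lemma multivariateGaussian_conv (μ ν : EuclideanSpace ℝ ι) {S T : Matrix ι ι ℝ} (hS : S.PosSemidef)
    (hT : T.PosSemidef) :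
    multivariateGaussian μ S ∗ multivariateGaussian ν T = multivariateGaussian (μ + ν) (S + T) := by
  refine Measure.ext_of_charFun (funext fun t => ?_)
  rw [charFun_conv, charFun_multivariateGaussian hS, charFun_multivariateGaussian hT,
    charFun_multivariateGaussian (hS.add hT), ← Complex.exp_add, inner_add_right, Matrix.add_mulVec,
    dotProduct_add]
  push_cast
  ring_nf

lemma posSemidef_one_sub_transpose_mul_self {B : Matrix ι ι ℝ}
    (hB : ‖Matrix.toEuclideanCLM (𝕜 := ℝ) B‖ ≤ 1) : (1 - Bᵀ * B).PosSemidef := by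
  refine .of_dotProduct_mulVec_nonneg (by simp [Matrix.IsHermitian]) fun v => ?_
  have norm_le : ‖Matrix.toEuclideanCLM (𝕜 := ℝ) B (.toLp 2 v)‖ ≤ ‖WithLp.toLp 2 v‖ :=
    ContinuousLinearMap.le_of_opNorm_le _ hB _ |>.trans_eq (one_mul _)
  have norm_sq : v ⬝ᵥ v = ‖WithLp.toLp 2 v‖ ^ 2 := by
    rw [EuclideanSpace.real_norm_sq_eq]
    simp [dotProduct, sq]
  rw [star_trivial, Matrix.sub_mulVec, Matrix.one_mulVec, dotProduct_sub, norm_sq,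
    dotProduct_transpose_mul_self_mulVec B (.toLp 2 v), sub_nonneg]
  gcongr

end GaussianCovariance

section GaussianMean

variable {ι E : Type*} [Fintype ι] [NormedAddCommGroup E] [NormedSpace ℝ E]

/-- The mean square `𝔼 ‖∑ j, γ j • y j‖ ^ 2` of a sum with independent standard Gaussian
coefficients `γ j`. -/
def gaussMeanSq (y : ι → E) : ℝ :=
  ∫ v, ‖∑ j, v j • y j‖ ^ 2 ∂stdGaussian (EuclideanSpace ℝ ι)

/-- The linear map `v ↦ ∑ j, v j • y j` on Euclidean space. -/
def euclideanCombination (y : ι → E) : EuclideanSpace ℝ ι →L[ℝ] E :=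
  ∑ j, (EuclideanSpace.proj j).smulRight (y j)

@[simp]
lemma euclideanCombination_apply (y : ι → E) (v : EuclideanSpace ℝ ι) :
    euclideanCombination y v = ∑ j, v j • y j := by
  simp [euclideanCombination]

lemma integrable_norm_sum_smul_sq (μ : Measure (EuclideanSpace ℝ ι)) [IsGaussian μ] (y : ι → E) :
    Integrable (fun v : EuclideanSpace ℝ ι => ‖∑ j, v j • y j‖ ^ 2) μ := by
  have memLp_two := (euclideanCombination y).comp_memLp' (IsGaussian.memLp_two_id (μ := μ))
  simpa using memLp_two.integrable_norm_pow (by norm_num)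

lemma ofReal_gaussMeanSq (y : ι → E) :
    ENNReal.ofReal (gaussMeanSq y) =
      ∫⁻ v, ENNReal.ofReal (‖∑ j, v j • y j‖ ^ 2) ∂stdGaussian (EuclideanSpace ℝ ι) :=
  ofReal_integral_eq_lintegral_ofReal (integrable_norm_sum_smul_sq _ y)
    (ae_of_all _ fun _ => sq_nonneg _)

lemma gaussMeanSq_matrix_sum_smul [DecidableEq ι] (B : Matrix ι ι ℝ) (y : ι → E) :
    gaussMeanSq (fun i => ∑ j, B i j • y j) =
      ∫ v, ‖∑ j, v j • y j‖ ^ 2 ∂multivariateGaussian 0 (B.transpose * B) := by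
  rw [← map_toEuclideanCLM_transpose_stdGaussian, integral_map (by fun_prop) (by fun_prop)]
  refine integral_congr_ae (ae_of_all _ fun v => ?_)
  simp only [Finset.smul_sum, smul_smul, Matrix.ofLp_toEuclideanCLM, Matrix.mulVec, dotProduct,
    Matrix.transpose_apply, Finset.sum_smul]
  rw [Finset.sum_comm]
  simp only [mul_comm]

theorem gaussMeanSq_matrix_sum_smul_le [DecidableEq ι] {B : Matrix ι ι ℝ}
    (hB : ‖Matrix.toEuclideanCLM (𝕜 := ℝ) B‖ ≤ 1) (y : ι → E) :
    gaussMeanSq (fun i => ∑ j, B i j • y j) ≤ gaussMeanSq y := by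
  have split : stdGaussian (EuclideanSpace ℝ ι) =
      multivariateGaussian 0 (B.transpose * B) ∗ multivariateGaussian 0 (1 - B.transpose * B) := by
    rw [multivariateGaussian_conv _ _ (by simpa using B.posSemidef_conjTranspose_mul_self)
      (posSemidef_one_sub_transpose_mul_self hB), add_zero, add_sub_cancel,
      multivariateGaussian_zero_one]
  have convex : ConvexOn ℝ Set.univ fun v : EuclideanSpace ℝ ι => ‖∑ j, v j • y j‖ ^ 2 := by
    simpa using convexOn_norm_sq_comp (euclideanCombination y : EuclideanSpace ℝ ι →ₗ[ℝ] E)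
  rw [gaussMeanSq_matrix_sum_smul, gaussMeanSq, split]
  exact integral_le_integral_conv_of_convexOn convex (by fun_prop) IsGaussian.integrable_fun_id
    (by simp) (integrable_norm_sum_smul_sq _ y) (split ▸ integrable_norm_sum_smul_sq _ y)

end GaussianMean

section GaussianLimit

variable {ι E : Type*} [Fintype ι] [DecidableEq ι] [NormedAddCommGroup E] [NormedSpace ℝ E]

lemma expect_norm_sum_normalizedSignSum_smul_sq (K : ℕ) (y : ι → E) :
    𝔼 ω : Fin K × ι → ℤˣ, ‖∑ j, normalizedSignSum ω j • y j‖ ^ 2 =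
      (K : ℝ)⁻¹ * radMeanSq fun p : Fin K × ι => y p.2 := by
  have sum_eq (ω : Fin K × ι → ℤˣ) :
      ∑ j, normalizedSignSum ω j • y j = (√K)⁻¹ • ∑ p : Fin K × ι, ω p • y p.2 := by
    simp only [normalizedSignSum, mul_smul, ← Finset.smul_sum, Finset.sum_smul,
      sign_smul_eq_intCast_smul, Fintype.sum_prod_type_right]
  simp only [sum_eq, norm_smul, mul_pow, ← Finset.mul_expect, radMeanSq]
  simp

theorem gaussMeanSq_le_of_forall_radMeanSq_le {y : ι → E} {C : ℝ} (hC : 0 ≤ C)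
    (h : ∀ K : ℕ, radMeanSq (fun p : Fin K × ι => y p.2) ≤ K * C) : gaussMeanSq y ≤ C := by
  rw [← ENNReal.ofReal_le_ofReal_iff hC, ofReal_gaussMeanSq]
  have fatou := lintegral_le_liminf_lintegral_of_forall_isOpen_measure_le_liminf_measure
    (f := fun v : EuclideanSpace ℝ ι => ‖∑ j, v j • y j‖ ^ 2) (by fun_prop)
    (fun _ => sq_nonneg _)
    (fun O hO => ProbabilityMeasure.le_liminf_measure_open_of_tendsto
      tendsto_uniformLaw_normalizedSignSum hO)
  refine fatou.trans (liminf_le_of_frequently_le' (Eventually.frequently ?_))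
  filter_upwards [eventually_gt_atTop 0] with K hK
  simp only [ProbabilityMeasure.coe_mk]
  rw [lintegral_uniformLaw_ofReal _ fun v => sq_nonneg _, expect_norm_sum_normalizedSignSum_smul_sq]
  exact ENNReal.ofReal_le_ofReal ((inv_mul_le_iff₀ (by positivity)).2 (h K))

end GaussianLimit

section SignInvariance

variable {ι : Type*}

lemma exists_sign_smul_eq_abs (v : ι → ℝ) : ∃ s : ι → ℤˣ, s • v = fun j => |v j| := by
  refine ⟨fun j => if 0 ≤ v j then 1 else -1, funext fun j => ?_⟩
  by_cases h : 0 ≤ v j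
  · simp [h, abs_of_nonneg h]
  · simp [h, abs_of_neg (not_le.1 h), Units.smul_def]

lemma continuous_sign_smul (ε : ι → ℤˣ) : Continuous fun v : ι → ℝ => ε • v :=
  continuous_pi fun j => by simpa [sign_smul_eq_intCast_smul] using (continuous_apply j).const_mul _

lemma expect_sign_smul_abs [Fintype ι] [DecidableEq ι] (f : (ι → ℝ) → ℝ) (v : ι → ℝ) :
    𝔼 ε : ι → ℤˣ, f (ε • fun j => |v j|) = 𝔼 ε : ι → ℤˣ, f (ε • v) := by
  obtain ⟨s, hs⟩ := exists_sign_smul_eq_abs v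
  exact Fintype.expect_equiv (Equiv.mulRight s) _ _ fun ε => by simp [← hs, smul_smul]

variable {μ : Measure (ι → ℝ)} {f : (ι → ℝ) → ℝ}

lemma integrable_sign_smul_abs [Finite ι]
    (hμ : ∀ ε : ι → ℤˣ, MeasurePreserving (fun v => ε • v) μ μ)
    (hfc : Continuous f) (hf : Integrable f μ) (ε : ι → ℤˣ) :
    Integrable (fun v => f (ε • fun j => |v j|)) μ := by
  have := Fintype.ofFinite (ι → ℤˣ)
  have dominating : Integrable (fun v => ∑ δ : ι → ℤˣ, ‖f (δ • v)‖) μ :=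
    integrable_finsetSum _ fun δ _ => ((hμ δ).integrable_comp_of_integrable hf).norm
  have continuous_comp : Continuous fun v : ι → ℝ => f (ε • fun j => |v j|) :=
    hfc.comp ((continuous_sign_smul ε).comp (by fun_prop))
  refine dominating.mono' continuous_comp.aestronglyMeasurable (ae_of_all _ fun v => ?_)
  obtain ⟨s, hs⟩ := exists_sign_smul_eq_abs v
  rw [← hs, smul_smul]
  exact Finset.single_le_sum (f := fun δ : ι → ℤˣ => ‖f (δ • v)‖) (fun _ _ => norm_nonneg _)
    (Finset.mem_univ (ε * s))

theorem expect_sign_smul_integral_abs_le [Fintype ι] [DecidableEq ι] [IsProbabilityMeasure μ]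
    (hμ : ∀ ε : ι → ℤˣ, MeasurePreserving (fun v => ε • v) μ μ)
    (hint : ∀ j, Integrable (fun v => v j) μ) (hfconv : ConvexOn ℝ Set.univ f)
    (hfc : Continuous f) (hf : Integrable f μ) :
    𝔼 ε : ι → ℤˣ, f (ε • fun j => ∫ v, |v j| ∂μ) ≤ ∫ v, f v ∂μ := by
  have hf_abs := integrable_sign_smul_abs hμ hfc hf
  have jensen (ε : ι → ℤˣ) : f (ε • fun j => ∫ v, |v j| ∂μ) ≤ ∫ v, f (ε • fun j => |v j|) ∂μ := by
    have integrable_coord (j : ι) : Integrable (fun v => (ε • fun j => |v j|) j) μ := by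
      simpa [sign_smul_eq_intCast_smul] using (hint j).abs.const_mul _
    have integral_eq : ∫ v, (ε • fun j => |v j|) ∂μ = ε • fun j => ∫ v, |v j| ∂μ := by
      ext j
      rw [eval_integral integrable_coord]
      simp [sign_smul_eq_intCast_smul, integral_const_mul]
    rw [← integral_eq]
    exact hfconv.map_integral_le hfc.continuousOn isClosed_univ (by simp)
      (.of_eval integrable_coord) (hf_abs ε)
  have expect_integral {g : (ι → ℤˣ) → (ι → ℝ) → ℝ} (hg : ∀ ε, Integrable (g ε) μ) :
      𝔼 ε, ∫ v, g ε v ∂μ = ∫ v, 𝔼 ε, g ε v ∂μ := by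
    simp only [Fintype.expect_eq_sum_div_card]
    rw [integral_div, integral_finsetSum _ fun ε _ => hg ε]
  have integral_sign_smul (ε : ι → ℤˣ) : ∫ v, f (ε • v) ∂μ = ∫ v, f v ∂μ := by
    rw [← integral_map (hμ ε).aemeasurable hfc.aestronglyMeasurable, (hμ ε).map_eq]
  calc 𝔼 ε : ι → ℤˣ, f (ε • fun j => ∫ v, |v j| ∂μ)
      ≤ 𝔼 ε : ι → ℤˣ, ∫ v, f (ε • fun j => |v j|) ∂μ :=
        Finset.expect_le_expect fun ε _ => jensen ε
    _ = 𝔼 ε : ι → ℤˣ, ∫ v, f (ε • v) ∂μ := by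
      rw [expect_integral hf_abs, 
        expect_integral (g := fun ε v => f (ε • v)) fun ε =>
          (hμ ε).integrable_comp_of_integrable hf]
      simp only [expect_sign_smul_abs]
    _ = ∫ v, f v ∂μ := by simp only [integral_sign_smul, Fintype.expect_const]

end SignInvariance

/-- The first absolute moment `𝔼 |γ|` of a standard Gaussian variable. -/
def gaussAbsMoment : ℝ := ∫ x, |x| ∂gaussianReal 0 1

lemma gaussAbsMoment_pos : 0 < gaussAbsMoment := by
  have integrable_abs : Integrable (fun x : ℝ => |x|) (gaussianReal 0 1) :=
    IsGaussian.integrable_fun_id.abs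
  refine (integral_pos_iff_support_of_nonneg (fun x => abs_nonneg x) integrable_abs).2 ?_
  have : Function.support (fun x : ℝ => |x|) = {0}ᶜ := by
    ext x
    simp
  rw [this, prob_compl_eq_one_sub (measurableSet_singleton 0)]
  have := nullSingletonClass_gaussianReal (μ := 0) (v := 1) one_ne_zero
  simp

lemma measurePreserving_sign_smul_pi_gaussianReal {ι : Type*} [Fintype ι] (ε : ι → ℤˣ) :
    MeasurePreserving (fun v : ι → ℝ => ε • v) (.pi fun _ => gaussianReal 0 1)
      (.pi fun _ => gaussianReal 0 1) := by
  refine measurePreserving_pi (fun _ => gaussianReal 0 1) (fun _ => gaussianReal 0 1)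
    (f := fun j x => ε j • x) fun j => ?_
  simp only [sign_smul_eq_intCast_smul, smul_eq_mul]
  refine ⟨by fun_prop, ?_⟩
  rw [gaussianReal_map_const_mul]
  rcases Int.units_eq_one_or (ε j) with h | h <;> simp [h]

theorem gaussAbsMoment_sq_mul_radMeanSq_le {ι E : Type*} [Fintype ι] [DecidableEq ι]
    [NormedAddCommGroup E] [NormedSpace ℝ E] (y : ι → E) :
    gaussAbsMoment ^ 2 * radMeanSq y ≤ gaussMeanSq y := by
  let μ : Measure (ι → ℝ) := .pi fun _ => gaussianReal 0 1
  have integral_abs (j : ι) : ∫ v : ι → ℝ, |v j| ∂μ = gaussAbsMoment :=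
    integral_comp_eval (μ := fun _ : ι => gaussianReal 0 1) (f := fun x => |x|) (by fun_prop)
  have convex : ConvexOn ℝ Set.univ fun v : ι → ℝ => ‖∑ j, v j • y j‖ ^ 2 := by
    simpa [Fintype.linearCombination_apply] using
      convexOn_norm_sq_comp (Fintype.linearCombination ℝ y)
  have gauss_eq : gaussMeanSq y = ∫ v : ι → ℝ, ‖∑ j, v j • y j‖ ^ 2 ∂μ := by
    rw [gaussMeanSq, ← map_pi_eq_stdGaussian, integral_map (by fun_prop) (by fun_prop)]
  have integrable : Integrable (fun v : ι → ℝ => ‖∑ j, v j • y j‖ ^ 2) μ := by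
    have := integrable_norm_sum_smul_sq (stdGaussian (EuclideanSpace ℝ ι)) y
    rwa [← map_pi_eq_stdGaussian, integrable_map_measure (by fun_prop) (by fun_prop)] at this
  have lower := expect_sign_smul_integral_abs_le (μ := μ)
    measurePreserving_sign_smul_pi_gaussianReal
    (fun j => integrable_eval IsGaussian.integrable_fun_id) convex (by fun_prop) integrable
  rw [gauss_eq]
  refine le_of_eq_of_le ?_ lower
  simp only [radMeanSq, Finset.mul_expect]
  refine Finset.expect_congr rfl fun ε _ => ?_
  have sum_eq : ∑ j, (ε • fun _ => gaussAbsMoment) j • y j = gaussAbsMoment • ∑ j, ε j • y j := by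
    simp only [Pi.smul_apply', sign_smul_eq_intCast_smul, smul_eq_mul, mul_comm, mul_smul,
      Finset.smul_sum]
  simp only [integral_abs, sum_eq, norm_smul, mul_pow, Real.norm_eq_abs, sq_abs]

section MatrixBound

variable {ι κ : Type*} [Fintype ι] [Fintype κ] [DecidableEq ι] [DecidableEq κ]

lemma norm_toEuclideanCLM_map_le (φ : ℂ →L[ℝ] ℝ) (A : Matrix ι ι ℂ) :
    ‖Matrix.toEuclideanCLM (𝕜 := ℝ) (A.map φ)‖ ≤ ‖φ‖ * matOpNorm A := by
  refine ContinuousLinearMap.opNorm_le_bound _ (by unfold matOpNorm; positivity) fun v => ?_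
  let w : EuclideanSpace ℂ ι := .toLp 2 fun j => (v j : ℂ)
  have norm_w : ‖w‖ = ‖v‖ := by
    simp [EuclideanSpace.norm_eq, w]
  have apply_eq (i : ι) : Matrix.toEuclideanCLM (𝕜 := ℝ) (A.map φ) v i =
      φ (Matrix.toEuclideanCLM (𝕜 := ℂ) A w i) := by
    simp [Matrix.mulVec, dotProduct, w, mul_comm (A i _), ← Complex.real_smul, mul_comm (φ _)]
  calc ‖Matrix.toEuclideanCLM (𝕜 := ℝ) (A.map φ) v‖
      ≤ ‖φ‖ * ‖Matrix.toEuclideanCLM (𝕜 := ℂ) A w‖ := by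
        refine le_of_sq_le_sq ?_ (by positivity)
        rw [mul_pow, EuclideanSpace.norm_sq_eq, EuclideanSpace.norm_sq_eq, Finset.mul_sum]
        gcongr with i
        rw [apply_eq, ← mul_pow]
        gcongr
        exact φ.le_opNorm _
    _ ≤ ‖φ‖ * (matOpNorm A * ‖v‖) := by
      rw [← norm_w]
      gcongr
      exact ContinuousLinearMap.le_opNorm _ w
    _ = ‖φ‖ * matOpNorm A * ‖v‖ := (mul_assoc _ _ _).symm

variable {X : Type*} [NormedAddCommGroup X] [NormedSpace ℂ X] {α : ℝ}

lemma radMeanSq_add_I_smul_le (y z : ι → X) :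
    radMeanSq (fun j => y j + Complex.I • z j) ≤ 2 * (radMeanSq y + radMeanSq z) := by
  simp only [radMeanSq, ← Finset.expect_add_distrib, Finset.mul_expect]
  refine Finset.expect_le_expect fun ε _ => ?_
  have sum_eq : ∑ j, ε j • (y j + Complex.I • z j) =
      ∑ j, ε j • y j + Complex.I • ∑ j, ε j • z j := by
    simp only [smul_add, Finset.sum_add_distrib, Finset.smul_sum, smul_comm Complex.I]
  calc ‖∑ j, ε j • (y j + Complex.I • z j)‖ ^ 2
      ≤ (‖∑ j, ε j • y j‖ + ‖∑ j, ε j • z j‖) ^ 2 := by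
        rw [sum_eq]
        gcongr
        simpa only [norm_smul, Complex.norm_I, one_mul] using
          norm_add_le (∑ j, ε j • y j) (Complex.I • ∑ j, ε j • z j)
    _ ≤ 2 * (‖∑ j, ε j • y j‖ ^ 2 + ‖∑ j, ε j • z j‖ ^ 2) := add_sq_le

namespace PropAlphaWith

lemma gaussMeanSq_le (hX : PropAlphaWith X α) (y : ι → X) :
    gaussMeanSq y ≤ α ^ 2 * radMeanSq y := by
  refine gaussMeanSq_le_of_forall_radMeanSq_le
    (mul_nonneg (sq_nonneg α) (radMeanSq_nonneg y)) fun K => ?_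
  simpa [mul_left_comm] using hX.radMeanSq_comp_snd_le (ι := Fin K) y

lemma radMeanSq_real_matrix_sum_smul_le (hX : PropAlphaWith X α) {B : Matrix ι ι ℝ}
    (hB : ‖Matrix.toEuclideanCLM (𝕜 := ℝ) B‖ ≤ 1) (y : ι → X) :
    gaussAbsMoment ^ 2 * radMeanSq (fun i => ∑ j, B i j • y j) ≤ α ^ 2 * radMeanSq y :=
  calc gaussAbsMoment ^ 2 * radMeanSq (fun i => ∑ j, B i j • y j)
      ≤ gaussMeanSq fun i => ∑ j, B i j • y j := gaussAbsMoment_sq_mul_radMeanSq_le _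
    _ ≤ gaussMeanSq y := gaussMeanSq_matrix_sum_smul_le hB y
    _ ≤ α ^ 2 * radMeanSq y := hX.gaussMeanSq_le y

theorem radMeanSq_matrix_sum_smul_le (hX : PropAlphaWith X α) {A : Matrix ι ι ℂ}
    (hA : matOpNorm A ≤ 1) (y : ι → X) :
    gaussAbsMoment ^ 2 * radMeanSq (fun i => ∑ j, A i j • y j) ≤ 4 * α ^ 2 * radMeanSq y := by
  have contraction {φ : ℂ →L[ℝ] ℝ} (hφ : ‖φ‖ = 1) :
      gaussAbsMoment ^ 2 * radMeanSq (fun i => ∑ j, φ (A i j) • y j) ≤ α ^ 2 * radMeanSq y :=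
    hX.radMeanSq_real_matrix_sum_smul_le (B := A.map φ)
      ((norm_toEuclideanCLM_map_le φ A).trans (by simpa [hφ] using hA)) y
  have re_add_im (i : ι) : ∑ j, A i j • y j =
      ∑ j, Complex.reCLM (A i j) • y j + Complex.I • ∑ j, Complex.imCLM (A i j) • y j := by
    rw [Finset.smul_sum, ← Finset.sum_add_distrib]
    refine Finset.sum_congr rfl fun j _ => ?_
    conv_lhs => rw [← Complex.re_add_im (A i j), add_smul, mul_comm, mul_smul]
    simp only [Complex.coe_smul, Complex.reCLM_apply, Complex.imCLM_apply]
  calc gaussAbsMoment ^ 2 * radMeanSq (fun i => ∑ j, A i j • y j)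
      ≤ gaussAbsMoment ^ 2 * (2 * (radMeanSq (fun i => ∑ j, Complex.reCLM (A i j) • y j) +
          radMeanSq fun i => ∑ j, Complex.imCLM (A i j) • y j)) := by
        simp only [re_add_im]
        gcongr
        exact radMeanSq_add_I_smul_le _ _
    _ = 2 * (gaussAbsMoment ^ 2 * radMeanSq (fun i => ∑ j, Complex.reCLM (A i j) • y j) +
          gaussAbsMoment ^ 2 * radMeanSq fun i => ∑ j, Complex.imCLM (A i j) • y j) := by ring
    _ ≤ 2 * (α ^ 2 * radMeanSq y + α ^ 2 * radMeanSq y) :=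
        mul_le_mul_of_nonneg_left
          (add_le_add (contraction Complex.reCLM_norm) (contraction Complex.imCLM_norm)) zero_le_two
    _ = 4 * α ^ 2 * radMeanSq y := by ring

theorem radMeanSq₂_matrix_sum_smul_le (hX : PropAlphaWith X α)
    {A : Matrix (ι × κ) (ι × κ) ℂ} (hA : matOpNorm A ≤ 1) (x : ι → κ → X) :
    radMeanSq₂ (fun i k => ∑ j, ∑ l, A (i, k) (j, l) • x j l) ≤
      (2 * α ^ 3 / gaussAbsMoment) ^ 2 * radMeanSq₂ x := by
  let Ax (i : ι) (k : κ) : X := ∑ j, ∑ l, A (i, k) (j, l) • x j l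
  have uncurry_eq : Function.uncurry Ax = fun p => ∑ q, A p q • Function.uncurry x q := by
    ext p
    simp [Ax, Function.uncurry, Fintype.sum_prod_type]
  have := gaussAbsMoment_pos
  rw [div_pow, div_mul_eq_mul_div, le_div_iff₀ (by positivity), mul_comm]
  calc gaussAbsMoment ^ 2 * radMeanSq₂ Ax
      ≤ gaussAbsMoment ^ 2 * (α ^ 2 * radMeanSq (Function.uncurry Ax)) := by
        gcongr
        exact hX.radMeanSq₂_le_uncurry Ax
    _ = α ^ 2 * (gaussAbsMoment ^ 2 * radMeanSq (Function.uncurry Ax)) := mul_left_comm _ _ _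
    _ ≤ α ^ 2 * (4 * α ^ 2 * radMeanSq (Function.uncurry x)) := by
        rw [uncurry_eq]
        exact mul_le_mul_of_nonneg_left (hX.radMeanSq_matrix_sum_smul_le hA _) (sq_nonneg α)
    _ ≤ α ^ 2 * (4 * α ^ 2 * (α ^ 2 * radMeanSq₂ x)) := by
        gcongr
        exact hX.radMeanSq_uncurry_le x
    _ = (2 * α ^ 3) ^ 2 * radMeanSq₂ x := by ring

end PropAlphaWith

end MatrixBound

/-- Lemma 5.3: on a Banach space with property (α), the canonical homomorphisms
`σ_{m,X} : M_m(ℂ) → B(Rad_m(X))` are matricially R-bounded, uniformly in `m`. -/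
theorem sigma_mX_uniformly_matricially_R_bounded (α : ℝ) (hα : 1 ≤ α) :
    ∃ D : ℝ, 1 ≤ D ∧
      ∀ (X : Type u) (_ : NormedAddCommGroup X) (_ : NormedSpace ℂ X),
      PropAlphaWith X α →
      ∀ (n m : ℕ) (a : Fin n → Fin n → Matrix (Fin m) (Fin m) ℂ),
        matOpNorm (Matrix.of fun (p q : Fin n × Fin m) =>
          a p.1 q.1 p.2 q.2) ≤ 1 →
      ∀ x : Fin n → Fin m → X,
        radNorm2 (fun i k => ∑ j, ∑ l, a i j k l • x j l) ≤ D * radNorm2 x := by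
  have hD : 0 ≤ 2 * α ^ 3 / gaussAbsMoment := by
    have := gaussAbsMoment_pos
    positivity
  refine ⟨max 1 (2 * α ^ 3 / gaussAbsMoment), le_max_left _ _, ?_⟩
  intro X _ _ hX n m a ha x
  rw [radNorm2_eq_sqrt, radNorm2_eq_sqrt]
  calc √(radMeanSq₂ fun i k => ∑ j, ∑ l, a i j k l • x j l)
      ≤ √((2 * α ^ 3 / gaussAbsMoment) ^ 2 * radMeanSq₂ x) :=
        Real.sqrt_le_sqrt (hX.radMeanSq₂_matrix_sum_smul_le ha x)
    _ = 2 * α ^ 3 / gaussAbsMoment * √(radMeanSq₂ x) := by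
        rw [Real.sqrt_mul (sq_nonneg _), Real.sqrt_sq hD]
    _ ≤ max 1 (2 * α ^ 3 / gaussAbsMoment) * √(radMeanSq₂ x) := by
        gcongr
        exact le_max_right _ _

end
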